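/- Let f be a smooth (0,2)-tensor field on V which is antisymmetric (f_{jk} = −f_{kj}) and satisfies the Killing–Yano equation ∇_i f_{jk} + ∇_j f_{ik} = 0 for all i,j,k. Let x : I → V be a geodesic. Then the vector field L along x with components L^a(τ) := ∑_{b,c} g^{ab}(x(τ)) f_{bc}(x(τ)) ẋ^c(τ) is parallel propagated along x: dL^a/dτ + ∑_{b,c} Γ^a_{bc}(x(τ)) ẋ^b(τ) L^c(τ) = 0 for all a and all τ ∈ I. -/

import Mathlib

noncomputable section

/-- Partial derivative in the i-th coordinate direction of ℝⁿ. -/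
def pd {n : ℕ} (i : Fin n) (f : (Fin n → ℝ) → ℝ) (x : Fin n → ℝ) : ℝ :=
  fderiv ℝ f x (Pi.single i 1)

/-- Christoffel symbols Γ^i_{jk} := (1/2)∑_l g^{il}(∂_j g_{lk} + ∂_k g_{jl} − ∂_l g_{jk})
of the metric `g` with pointwise inverse `ginv`. -/
def christoffel {n : ℕ} (g ginv : (Fin n → ℝ) → Fin n → Fin n → ℝ)
    (i j k : Fin n) (x : Fin n → ℝ) : ℝ :=
  (1 / 2) * ∑ l, ginv x i l *
    (pd j (fun y => g y l k) x + pd k (fun y => g y j l) x - pd l (fun y => g y j k) x)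

/-- Covariant derivative ∇_i T_{jk} of a (0,2)-tensor field. -/
def covDeriv {n : ℕ} (g ginv : (Fin n → ℝ) → Fin n → Fin n → ℝ)
    (T : (Fin n → ℝ) → Fin n → Fin n → ℝ) (i j k : Fin n) (x : Fin n → ℝ) : ℝ :=
  pd i (fun y => T y j k) x
    - ∑ l, christoffel g ginv l i j x * T x l k
    - ∑ l, christoffel g ginv l i k x * T x j l

/-!
Write `D` for the covariant derivative along the curve and `v` for its velocity. Since `∇g = 0`,
raising an index commutes with `D`, so `D (g⁻¹ f v) = g⁻¹ ((∇_v f) v + f (D v))` by the Leibniz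
rule. The geodesic equation is `D v = 0`. Together with antisymmetry, the Killing–Yano equation
makes `∇_i f_{jk}` antisymmetric in `i` and `k` as well, so `(∇_v f) v = 0`.
-/

open Filter Matrix Topology

theorem dotProduct_mulVec_self_eq_zero_of_transpose_eq_neg {ι R : Type*} [Fintype ι] [CommRing R]
    [IsAddTorsionFree R] {A : Matrix ι ι R} (hA : Aᵀ = -A) (v : ι → R) : v ⬝ᵥ A *ᵥ v = 0 := by
  have h_eq_neg : v ⬝ᵥ A *ᵥ v = -(v ⬝ᵥ A *ᵥ v) :=
    calc v ⬝ᵥ A *ᵥ v = v ⬝ᵥ Aᵀ *ᵥ v := by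
          rw [dotProduct_mulVec, ← mulVec_transpose, dotProduct_comm]
      _ = -(v ⬝ᵥ A *ᵥ v) := by rw [hA, neg_mulVec, dotProduct_neg]
  exact self_eq_neg.mp h_eq_neg

theorem fderiv_eq_sum_pd {n : ℕ} (φ : (Fin n → ℝ) → ℝ) (p v : Fin n → ℝ) :
    fderiv ℝ φ p v = ∑ i, v i * pd i φ p := by
  conv_lhs => rw [pi_eq_sum_univ' v]
  simp [pd, map_sum]

section CoordDeriv

variable {n : ℕ} {ι κ : Type*} [Fintype κ]

/-- The componentwise derivative of a curve in a coordinate space; `coordDeriv x` is the velocity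
of the curve `x`. Taking components first makes every entry a scalar `deriv`, with value `0` where
that component is not differentiable. -/
def coordDeriv (u : ℝ → ι → ℝ) (t : ℝ) : ι → ℝ := fun a => deriv (fun s => u s a) t

theorem coordDeriv_mulVec {M : ℝ → Matrix ι κ ℝ} {u : ℝ → κ → ℝ} {τ : ℝ}
    (hM : ∀ i j, DifferentiableAt ℝ (fun t => M t i j) τ)
    (hu : ∀ j, DifferentiableAt ℝ (fun t => u t j) τ) :
    coordDeriv (fun t => M t *ᵥ u t) τ =
      of (fun i j => deriv (fun t => M t i j) τ) *ᵥ u τ + M τ *ᵥ coordDeriv u τ := by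
  ext i
  have h_comp : HasDerivAt (fun t => ∑ j, M t i j * u t j)
      (∑ j, (deriv (fun t => M t i j) τ * u τ j + M τ i j * deriv (fun t => u t j) τ)) τ :=
    HasDerivAt.fun_sum fun j _ => (hM i j).hasDerivAt.mul (hu j).hasDerivAt
  rw [Finset.sum_add_distrib] at h_comp
  exact h_comp.deriv

theorem hasDerivAt_comp_curve {φ : (Fin n → ℝ) → ℝ} {x : ℝ → Fin n → ℝ} {τ : ℝ}
    (hφ : DifferentiableAt ℝ φ (x τ)) (hx : ∀ i, DifferentiableAt ℝ (fun t => x t i) τ) :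
    HasDerivAt (fun t => φ (x t)) (∑ i, coordDeriv x τ i * pd i φ (x τ)) τ := by
  have hx' : HasDerivAt x (coordDeriv x τ) τ := hasDerivAt_pi.mpr fun i => (hx i).hasDerivAt
  rw [← fderiv_eq_sum_pd]
  exact hφ.hasFDerivAt.comp_hasDerivAt τ hx'

end CoordDeriv

section PdMatrix

variable {n : ℕ} {ι κ μ : Type*} {p : Fin n → ℝ}

/-- The entrywise partial derivative `∂_i T` of a matrix-valued field, for which the product rule
and the Christoffel corrections are matrix identities. -/
def pdMatrix (i : Fin n) (T : (Fin n → ℝ) → Matrix ι κ ℝ) (p : Fin n → ℝ) : Matrix ι κ ℝ :=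
  of fun j k => pd i (fun y => T y j k) p

theorem pdMatrix_congr (i : Fin n) {S T : (Fin n → ℝ) → Matrix ι κ ℝ} (h : S =ᶠ[𝓝 p] T) :
    pdMatrix i S p = pdMatrix i T p := by
  ext j k
  have h_entry : (fun y => S y j k) =ᶠ[𝓝 p] fun y => T y j k := h.mono fun y hy => congr_fun₂ hy j k
  simp only [pdMatrix, of_apply, pd, h_entry.fderiv_eq]

theorem pdMatrix_const (i : Fin n) (A : Matrix ι κ ℝ) : pdMatrix i (fun _ => A) p = 0 := by
  ext j k
  simp [pdMatrix, pd]

theorem pdMatrix_transpose (i : Fin n) (T : (Fin n → ℝ) → Matrix ι κ ℝ) :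
    pdMatrix i (fun y => (T y)ᵀ) p = (pdMatrix i T p)ᵀ :=
  rfl

theorem pdMatrix_neg (i : Fin n) (T : (Fin n → ℝ) → Matrix ι κ ℝ) :
    pdMatrix i (fun y => -T y) p = -pdMatrix i T p := by
  ext j k
  simp [pdMatrix, pd]

theorem pdMatrix_mul [Fintype κ] (i : Fin n) {S : (Fin n → ℝ) → Matrix ι κ ℝ}
    {T : (Fin n → ℝ) → Matrix κ μ ℝ} (hS : ∀ j l, DifferentiableAt ℝ (fun y => S y j l) p)
    (hT : ∀ l k, DifferentiableAt ℝ (fun y => T y l k) p) :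
    pdMatrix i (fun y => S y * T y) p = pdMatrix i S p * T p + S p * pdMatrix i T p := by
  ext j k
  have h_entry : HasFDerivAt (fun y => ∑ l, S y j l * T y l k)
      (∑ l, (S p j l • fderiv ℝ (fun y => T y l k) p
        + T p l k • fderiv ℝ (fun y => S y j l) p)) p :=
    HasFDerivAt.fun_sum fun l _ => (hS j l).hasFDerivAt.mul (hT l k).hasFDerivAt
  simp [pdMatrix, pd, mul_apply, h_entry.fderiv, Finset.sum_add_distrib, mul_comm, add_comm]

theorem differentiableAt_field_mulVec_apply [Fintype κ] {T : (Fin n → ℝ) → Matrix ι κ ℝ}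
    {x : ℝ → Fin n → ℝ} {u : ℝ → κ → ℝ} {τ : ℝ}
    (hT : ∀ j k, DifferentiableAt ℝ (fun y => T y j k) (x τ))
    (hx : ∀ i, DifferentiableAt ℝ (fun t => x t i) τ)
    (hu : ∀ k, DifferentiableAt ℝ (fun t => u t k) τ) (j : ι) :
    DifferentiableAt ℝ (fun t => (T (x t) *ᵥ u t) j) τ := by
  have h_sum : DifferentiableAt ℝ (fun t => ∑ k, T (x t) j k * u t k) τ :=
    DifferentiableAt.fun_sum fun k _ =>
      (hasDerivAt_comp_curve (hT j k) hx).differentiableAt.mul (hu k)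
  exact h_sum

theorem coordDeriv_field_mulVec [Fintype κ] {T : (Fin n → ℝ) → Matrix ι κ ℝ}
    {x : ℝ → Fin n → ℝ} {u : ℝ → κ → ℝ} {τ : ℝ}
    (hT : ∀ j k, DifferentiableAt ℝ (fun y => T y j k) (x τ))
    (hx : ∀ i, DifferentiableAt ℝ (fun t => x t i) τ)
    (hu : ∀ k, DifferentiableAt ℝ (fun t => u t k) τ) :
    coordDeriv (fun t => T (x t) *ᵥ u t) τ =
      ∑ i, coordDeriv x τ i • pdMatrix i T (x τ) *ᵥ u τ + T (x τ) *ᵥ coordDeriv u τ := by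
  have h_entry := fun j k => hasDerivAt_comp_curve (hT j k) hx
  have h_chain : of (fun j k => deriv (fun t => T (x t) j k) τ) =
      ∑ i, coordDeriv x τ i • pdMatrix i T (x τ) := by
    ext j k
    simp [(h_entry j k).deriv, Matrix.sum_apply, pdMatrix]
  rw [coordDeriv_mulVec (fun j k => (h_entry j k).differentiableAt) hu, h_chain, sum_mulVec]
  simp only [smul_mulVec]

end PdMatrix

section LeviCivita

variable {n : ℕ} {g ginv T : (Fin n → ℝ) → Matrix (Fin n) (Fin n) ℝ} {p : Fin n → ℝ}

/-- The connection matrix `Γ_i` with entries `(Γ_i)^a_c = Γ^a_{ic}`: row `a` is the upper index, so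
`Γ_i` acts on vectors and `-Γ_iᵀ` on covectors. -/
def christoffelMatrix (g ginv : (Fin n → ℝ) → Matrix (Fin n) (Fin n) ℝ) (i : Fin n)
    (p : Fin n → ℝ) : Matrix (Fin n) (Fin n) ℝ :=
  of fun a c => christoffel g ginv a i c p

/-- The covariant derivative `∇_i T` of a (0,2)-tensor field as the matrix with entries
`∇_i T_{jk}`, so that contracting its last index with a vector is `*ᵥ`. -/
def covDerivMatrix (g ginv T : (Fin n → ℝ) → Matrix (Fin n) (Fin n) ℝ) (i : Fin n)
    (p : Fin n → ℝ) : Matrix (Fin n) (Fin n) ℝ :=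
  of fun j k => covDeriv g ginv T i j k p

theorem covDerivMatrix_eq (i : Fin n) :
    covDerivMatrix g ginv T i p = pdMatrix i T p
      - (christoffelMatrix g ginv i p)ᵀ * T p - T p * christoffelMatrix g ginv i p := by
  ext j k
  simp [covDerivMatrix, covDeriv, pdMatrix, christoffelMatrix, mul_apply, mul_comm]

theorem metric_mul_christoffelMatrix_apply (h_inv : g p * ginv p = 1) (i j k : Fin n) :
    (g p * christoffelMatrix g ginv i p) j k =
      (1 / 2) * (pd i (fun y => g y j k) p + pd k (fun y => g y i j) p
        - pd j (fun y => g y i k) p) := by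
  let K : Matrix (Fin n) (Fin n) ℝ := of fun l m =>
    pd i (fun y => g y l m) p + pd m (fun y => g y i l) p - pd l (fun y => g y i m) p
  have h_christoffel : christoffelMatrix g ginv i p = (1 / 2 : ℝ) • (ginv p * K) := rfl
  rw [h_christoffel, mul_smul_comm, ← Matrix.mul_assoc, h_inv, Matrix.one_mul]
  rfl

theorem covDerivMatrix_metric (h_symm : ∀ᶠ y in 𝓝 p, (g y).IsSymm) (h_inv : g p * ginv p = 1)
    (i : Fin n) : covDerivMatrix g ginv g i p = 0 := by
  have h_pd_symm : (pdMatrix i g p)ᵀ = pdMatrix i g p := pdMatrix_congr i h_symm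
  have h_lower : (christoffelMatrix g ginv i p)ᵀ * g p = (g p * christoffelMatrix g ginv i p)ᵀ := by
    rw [transpose_mul, h_symm.self_of_nhds.eq]
  ext j k
  have h_entry : pd i (fun y => g y k j) p = pd i (fun y => g y j k) p := congr_fun₂ h_pd_symm j k
  rw [covDerivMatrix_eq, h_lower]
  simp only [Matrix.sub_apply, transpose_apply, metric_mul_christoffelMatrix_apply h_inv, h_entry,
    pdMatrix, of_apply, Matrix.zero_apply]
  ring

theorem pdMatrix_inverse_metric (hg : ∀ i j, DifferentiableAt ℝ (fun y => g y i j) p)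
    (hginv : ∀ i j, DifferentiableAt ℝ (fun y => ginv y i j) p)
    (h_symm : ∀ᶠ y in 𝓝 p, (g y).IsSymm) (h_inv : ∀ᶠ y in 𝓝 p, g y * ginv y = 1) (i : Fin n) :
    pdMatrix i ginv p =
      -(christoffelMatrix g ginv i p * ginv p + ginv p * (christoffelMatrix g ginv i p)ᵀ) := by
  set Γ := christoffelMatrix g ginv i p
  have h_right : g p * ginv p = 1 := h_inv.self_of_nhds
  have h_left : ginv p * g p = 1 := mul_eq_one_comm.mp h_right
  have h_compat : pdMatrix i g p = Γᵀ * g p + g p * Γ := by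
    have h_cov := covDerivMatrix_metric h_symm h_right i
    rwa [covDerivMatrix_eq, sub_sub, sub_eq_zero] at h_cov
  have h_leibniz : pdMatrix i g p * ginv p + g p * pdMatrix i ginv p = 0 := by
    rw [← pdMatrix_mul i hg hginv, pdMatrix_congr i h_inv, pdMatrix_const]
  calc pdMatrix i ginv p = ginv p * (g p * pdMatrix i ginv p) := by
        rw [← Matrix.mul_assoc, h_left, Matrix.one_mul]
    _ = -(ginv p * Γᵀ * (g p * ginv p) + ginv p * g p * Γ * ginv p) := by
        rw [eq_neg_of_add_eq_zero_right h_leibniz, h_compat]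
        noncomm_ring
    _ = -(Γ * ginv p + ginv p * Γᵀ) := by
        rw [h_right, h_left, Matrix.mul_one, Matrix.one_mul, add_comm]

theorem covDerivMatrix_transpose_eq_neg (h_anti : ∀ᶠ y in 𝓝 p, (T y)ᵀ = -T y) (i : Fin n) :
    (covDerivMatrix g ginv T i p)ᵀ = -covDerivMatrix g ginv T i p := by
  have h_pd : (pdMatrix i T p)ᵀ = -pdMatrix i T p := by
    rw [← pdMatrix_transpose, pdMatrix_congr i h_anti, pdMatrix_neg]
  rw [covDerivMatrix_eq]
  simp only [transpose_sub, transpose_mul, transpose_transpose, h_pd, h_anti.self_of_nhds]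
  noncomm_ring

theorem sum_smul_covDerivMatrix_mulVec_self_eq_zero (h_anti : ∀ᶠ y in 𝓝 p, (T y)ᵀ = -T y)
    (hKY : ∀ i j k, covDeriv g ginv T i j k p + covDeriv g ginv T j i k p = 0) (v : Fin n → ℝ) :
    ∑ i, v i • covDerivMatrix g ginv T i p *ᵥ v = 0 := by
  have h_last (i j k : Fin n) : covDeriv g ginv T i k j p = -covDeriv g ginv T i j k p :=
    congr_fun₂ (covDerivMatrix_transpose_eq_neg h_anti i) j k
  have h_first (i j k : Fin n) : covDeriv g ginv T i j k p = -covDeriv g ginv T j i k p :=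
    eq_neg_of_add_eq_zero_left (hKY i j k)
  ext j
  have h_outer : (of fun i k => covDeriv g ginv T i j k p)ᵀ =
      -of fun i k => covDeriv g ginv T i j k p := by
    ext i k
    calc covDeriv g ginv T k j i p = -covDeriv g ginv T j k i p := h_first k j i
      _ = covDeriv g ginv T j i k p := by rw [h_last j i k, neg_neg]
      _ = -covDeriv g ginv T i j k p := h_first j i k
  rw [Finset.sum_apply]
  exact dotProduct_mulVec_self_eq_zero_of_transpose_eq_neg h_outer v

end LeviCivita

section AlongCurve

variable {n : ℕ} {g ginv T : (Fin n → ℝ) → Matrix (Fin n) (Fin n) ℝ} {x u ω : ℝ → Fin n → ℝ}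
  {τ : ℝ}

/-- The covariant derivative `u̇^a + Γ^a_{ic} ẋ^i u^c` along `x` of a vector field `u` along `x`;
`u` is parallel when it vanishes, and `x` is a geodesic when `coordDeriv x` is parallel. -/
def covDerivAlong (g ginv : (Fin n → ℝ) → Matrix (Fin n) (Fin n) ℝ) (x u : ℝ → Fin n → ℝ)
    (τ : ℝ) : Fin n → ℝ :=
  coordDeriv u τ + ∑ i, coordDeriv x τ i • christoffelMatrix g ginv i (x τ) *ᵥ u τ

/-- The covariant derivative `ω̇_c - Γ^a_{ic} ẋ^i ω_a` along `x` of a covector field `ω` along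
`x`, such as the contraction of a (0,2)-tensor field with a vector field along `x`. -/
def covectorCovDerivAlong (g ginv : (Fin n → ℝ) → Matrix (Fin n) (Fin n) ℝ)
    (x ω : ℝ → Fin n → ℝ) (τ : ℝ) : Fin n → ℝ :=
  coordDeriv ω τ - ∑ i, coordDeriv x τ i • (christoffelMatrix g ginv i (x τ))ᵀ *ᵥ ω τ

theorem covDerivAlong_apply (a : Fin n) :
    covDerivAlong g ginv x u τ a = deriv (fun t => u t a) τ +
      ∑ b, ∑ c, christoffel g ginv a b c (x τ) * deriv (fun t => x t b) τ * u τ c := by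
  simp only [covDerivAlong, coordDeriv, christoffelMatrix, mulVec, dotProduct, of_apply,
    Pi.add_apply, Finset.sum_apply, Pi.smul_apply, smul_eq_mul, Finset.mul_sum, mul_left_comm,
    mul_assoc]

theorem covectorCovDerivAlong_mulVec (hT : ∀ j k, DifferentiableAt ℝ (fun y => T y j k) (x τ))
    (hx : ∀ i, DifferentiableAt ℝ (fun t => x t i) τ)
    (hu : ∀ i, DifferentiableAt ℝ (fun t => u t i) τ) :
    covectorCovDerivAlong g ginv x (fun t => T (x t) *ᵥ u t) τ =
      ∑ i, coordDeriv x τ i • covDerivMatrix g ginv T i (x τ) *ᵥ u τ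
        + T (x τ) *ᵥ covDerivAlong g ginv x u τ := by
  simp only [covectorCovDerivAlong, covDerivAlong, coordDeriv_field_mulVec hT hx hu,
    covDerivMatrix_eq, sub_mulVec, smul_sub, Finset.sum_sub_distrib, mulVec_add, mulVec_sum,
    mulVec_smul, mulVec_mulVec]
  abel

theorem covDerivAlong_inverse_metric_mulVec
    (hg : ∀ i j, DifferentiableAt ℝ (fun y => g y i j) (x τ))
    (hginv : ∀ i j, DifferentiableAt ℝ (fun y => ginv y i j) (x τ))
    (h_symm : ∀ᶠ y in 𝓝 (x τ), (g y).IsSymm) (h_inv : ∀ᶠ y in 𝓝 (x τ), g y * ginv y = 1)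
    (hx : ∀ i, DifferentiableAt ℝ (fun t => x t i) τ)
    (hω : ∀ i, DifferentiableAt ℝ (fun t => ω t i) τ) :
    covDerivAlong g ginv x (fun t => ginv (x t) *ᵥ ω t) τ =
      ginv (x τ) *ᵥ covectorCovDerivAlong g ginv x ω τ := by
  simp only [covDerivAlong, covectorCovDerivAlong, coordDeriv_field_mulVec hginv hx hω,
    pdMatrix_inverse_metric hg hginv h_symm h_inv, neg_mulVec, add_mulVec, smul_neg, smul_add,
    Finset.sum_neg_distrib, Finset.sum_add_distrib, mulVec_sub, mulVec_sum, mulVec_smul,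
    mulVec_mulVec]
  abel

theorem covDerivAlong_killingYano_eq_zero
    (hg : ∀ i j, DifferentiableAt ℝ (fun y => g y i j) (x τ))
    (hginv : ∀ i j, DifferentiableAt ℝ (fun y => ginv y i j) (x τ))
    (h_symm : ∀ᶠ y in 𝓝 (x τ), (g y).IsSymm) (h_inv : ∀ᶠ y in 𝓝 (x τ), g y * ginv y = 1)
    (hT : ∀ i j, DifferentiableAt ℝ (fun y => T y i j) (x τ))
    (h_anti : ∀ᶠ y in 𝓝 (x τ), (T y)ᵀ = -T y)
    (hKY : ∀ i j k, covDeriv g ginv T i j k (x τ) + covDeriv g ginv T j i k (x τ) = 0)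
    (hx : ∀ i, DifferentiableAt ℝ (fun t => x t i) τ)
    (hx' : ∀ i, DifferentiableAt ℝ (fun t => coordDeriv x t i) τ)
    (h_geodesic : covDerivAlong g ginv x (coordDeriv x) τ = 0) :
    covDerivAlong g ginv x (fun t => ginv (x t) *ᵥ T (x t) *ᵥ coordDeriv x t) τ = 0 := by
  rw [covDerivAlong_inverse_metric_mulVec hg hginv h_symm h_inv hx
      (differentiableAt_field_mulVec_apply hT hx hx'),
    covectorCovDerivAlong_mulVec hT hx hx',
    sum_smul_covDerivMatrix_mulVec_self_eq_zero h_anti hKY, h_geodesic]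
  simp only [mulVec_zero, add_zero]

end AlongCurve

theorem killingYano_parallel_transport_general {n : ℕ}
    {g ginv f : (Fin n → ℝ) → Fin n → Fin n → ℝ} {x : ℝ → Fin n → ℝ} {τ : ℝ}
    (hg : ∀ i j, DifferentiableAt ℝ (fun y => g y i j) (x τ))
    (hginv : ∀ i j, DifferentiableAt ℝ (fun y => ginv y i j) (x τ))
    (hgsymm : ∀ᶠ y in 𝓝 (x τ), ∀ i j, g y i j = g y j i)
    (hinv : ∀ᶠ y in 𝓝 (x τ), ∀ i j, ∑ k, g y i k * ginv y k j = if i = j then (1 : ℝ) else 0)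
    (hf : ∀ i j, DifferentiableAt ℝ (fun y => f y i j) (x τ))
    (hfanti : ∀ᶠ y in 𝓝 (x τ), ∀ j k, f y j k = -f y k j)
    (hKY : ∀ i j k, covDeriv g ginv f i j k (x τ) + covDeriv g ginv f j i k (x τ) = 0)
    (hx : ∀ i, DifferentiableAt ℝ (fun t => x t i) τ)
    (hx' : ∀ i, DifferentiableAt ℝ (deriv fun t => x t i) τ)
    (hgeo : ∀ i, deriv (deriv (fun t => x t i)) τ
        + ∑ j, ∑ k, christoffel g ginv i j k (x τ)
            * deriv (fun t => x t j) τ * deriv (fun t => x t k) τ = 0) (a : Fin n) :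
    deriv (fun t =>
        ∑ b, ∑ c, ginv (x t) a b * f (x t) b c * deriv (fun s => x s c) t) τ
      + ∑ b, ∑ c, christoffel g ginv a b c (x τ) * deriv (fun t => x t b) τ *
          (∑ d, ∑ e, ginv (x τ) c d * f (x τ) d e * deriv (fun t => x t e) τ)
      = 0 := by
  have h_symm : ∀ᶠ y in 𝓝 (x τ), (of (g y)).IsSymm :=
    hgsymm.mono fun y hy => IsSymm.ext fun i j => hy j i
  have h_inv : ∀ᶠ y in 𝓝 (x τ), of (g y) * of (ginv y) = 1 :=
    hinv.mono fun y hy => Matrix.ext fun i j => by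
      simpa only [mul_apply, of_apply, one_apply] using hy i j
  have h_anti : ∀ᶠ y in 𝓝 (x τ), (of (f y))ᵀ = -of (f y) :=
    hfanti.mono fun y hy => Matrix.ext fun j k => hy k j
  have h_geodesic : covDerivAlong g ginv x (coordDeriv x) τ = 0 :=
    funext fun i => (covDerivAlong_apply i).trans (hgeo i)
  have h_parallel :=
    covDerivAlong_killingYano_eq_zero hg hginv h_symm h_inv hf h_anti hKY hx hx' h_geodesic
  have h_component := (covDerivAlong_apply a).symm.trans (congr_fun h_parallel a)
  simpa only [mulVec, dotProduct, coordDeriv, Finset.mul_sum, mul_assoc, Pi.zero_apply]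
    using h_component

/-- The vector L^a := g^{ab} f_{bc} ẋ^c built from a Killing–Yano tensor f is
parallel propagated along any geodesic. -/
theorem killingYano_parallel_transport
    (n : ℕ) (V : Set (Fin n → ℝ)) (hV : IsOpen V)
    (g ginv f : (Fin n → ℝ) → Fin n → Fin n → ℝ)
    (hg : ∀ i j, ContDiffOn ℝ (⊤ : ℕ∞) (fun x => g x i j) V)
    (hginv : ∀ i j, ContDiffOn ℝ (⊤ : ℕ∞) (fun x => ginv x i j) V)
    (hgsymm : ∀ x ∈ V, ∀ i j, g x i j = g x j i)
    (hinv : ∀ x ∈ V, ∀ i j, ∑ k, g x i k * ginv x k j = if i = j then (1 : ℝ) else 0)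
    (hf : ∀ i j, ContDiffOn ℝ (⊤ : ℕ∞) (fun x => f x i j) V)
    (hfanti : ∀ x ∈ V, ∀ j k, f x j k = -f x k j)
    (hKY : ∀ x ∈ V, ∀ i j k,
      covDeriv g ginv f i j k x + covDeriv g ginv f j i k x = 0)
    (I : Set ℝ) (hI : Set.OrdConnected I) (hIopen : IsOpen I)
    (x : ℝ → Fin n → ℝ) (hx : ContDiffOn ℝ 2 x I)
    (hxV : ∀ τ ∈ I, x τ ∈ V)
    (hgeo : ∀ τ ∈ I, ∀ i, deriv (deriv (fun t => x t i)) τ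
        + ∑ j, ∑ k, christoffel g ginv i j k (x τ)
            * deriv (fun t => x t j) τ * deriv (fun t => x t k) τ = 0) :
    ∀ τ ∈ I, ∀ a,
      deriv (fun t =>
          ∑ b, ∑ c, ginv (x t) a b * f (x t) b c * deriv (fun s => x s c) t) τ
        + ∑ b, ∑ c, christoffel g ginv a b c (x τ) * deriv (fun t => x t b) τ *
            (∑ d, ∑ e, ginv (x τ) c d * f (x τ) d e * deriv (fun t => x t e) τ)
        = 0 := by
  intro τ hτ
  have hp : V ∈ 𝓝 (x τ) := hV.mem_nhds (hxV τ hτ)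
  have hτ_nhds : I ∈ 𝓝 τ := hIopen.mem_nhds hτ
  have h_diff {φ : (Fin n → ℝ) → ℝ} (hφ : ContDiffOn ℝ (⊤ : ℕ∞) φ V) :
      DifferentiableAt ℝ φ (x τ) := (hφ.contDiffAt hp).differentiableAt (by simp)
  have h_velocity (i : Fin n) : ContDiffOn ℝ 1 (deriv fun t => x t i) I :=
    (contDiffOn_pi.mp hx i).deriv_of_isOpen hIopen (by norm_num)
  exact killingYano_parallel_transport_general (fun i j => h_diff (hg i j))
    (fun i j => h_diff (hginv i j)) (eventually_of_mem hp hgsymm) (eventually_of_mem hp hinv)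
    (fun i j => h_diff (hf i j)) (eventually_of_mem hp hfanti) (hKY _ (hxV τ hτ))
    (fun i => ((contDiffOn_pi.mp hx i).contDiffAt hτ_nhds).differentiableAt (by simp))
    (fun i => ((h_velocity i).contDiffAt hτ_nhds).differentiableAt (by simp)) (hgeo τ hτ)
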